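/- The zeros of ℘'(z) + √3 are exactly the points ϖ/3 + ω, e^{πi/3}·(2ϖ/3) + ω, e^{2πi/3}·(ϖ/3) + ω with ω ∈ 𝕋, and they are all simple. -/

import Mathlib

open Complex

noncomputable section

/-- `e^{πi/3}`. -/
def τ : ℂ := Complex.exp (Real.pi * Complex.I / 3)

/-- The point `mϖ + n e^{πi/3} ϖ` of the hexagonal lattice with real period `ϖ`. -/
def hexPt (ϖ : ℝ) (p : ℤ × ℤ) : ℂ := p.1 * ϖ + p.2 * τ * ϖ

/-- The hexagonal lattice `𝕋 = ℤϖ + ℤ e^{πi/3} ϖ`. -/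
def hexLattice (ϖ : ℝ) : Set ℂ := Set.range (hexPt ϖ)

/-- The real fundamental period `ϖ = Γ(1/3)³/(2π)`. -/
def ϖ₀ : ℝ := (Real.Gamma (1/3))^3 / (2 * Real.pi)

/-- The Weierstrass `℘`-function of the hexagonal lattice `𝕋 = ℤϖ₀ + ℤ e^{πi/3} ϖ₀`,
i.e. the `℘`-function with invariants `g₂ = 0`, `g₃ = 1`. -/
def wp (z : ℂ) : ℂ :=
  1 / z ^ 2 + ∑' p : {p : ℤ × ℤ // p ≠ 0}, (1 / (z - hexPt ϖ₀ p) ^ 2 - 1 / (hexPt ϖ₀ p) ^ 2)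

/-- The Weierstrass `σ`-function of the hexagonal lattice with real period `ϖ`. -/
def wSigma (ϖ : ℝ) (z : ℂ) : ℂ :=
  z * ∏' p : {p : ℤ × ℤ // p ≠ 0},
    ((1 - z / hexPt ϖ p) * Complex.exp (z / hexPt ϖ p + z ^ 2 / (2 * (hexPt ϖ p) ^ 2)))

/-- The Weierstrass `ζ`-function of the hexagonal lattice with real period `ϖ`. -/
def wZeta (ϖ : ℝ) (z : ℂ) : ℂ :=
  1 / z + ∑' p : {p : ℤ × ℤ // p ≠ 0},
    (1 / (z - hexPt ϖ p) + 1 / hexPt ϖ p + z / (hexPt ϖ p) ^ 2)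

/-!
The differential equation `℘'' = 6℘² - g₂/2` shows that the pair `(℘, ℘')` separates points modulo
the lattice. On a lattice with multiplication by `τ` one has `℘'² = 4℘³ - g₃`, so points with the
same value of `℘'` have the same `℘³`, and they form one orbit under multiplication by `τ²` modulo
the lattice. It remains to see that `ϖ/3` is a zero of `℘' + √3`. The multiplication by
`√-3 = 2τ - 1` is the classical 3-isogeny of `y² = 4x³ - g₃`, whence `℘(ϖ/3)³ = g₃` and
`℘'(ϖ/3)² = 3g₃`, with `℘' < 0` on the first half of the real period. Finally, the real half-period
is an elliptic integral which `s = (℘(ϖ/2)/℘)³` turns into a Beta integral, giving `g₃ = 1`.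
-/

open Filter MeasureTheory Set Topology
open scoped ComplexConjugate PeriodPair

section LinearODE

variable {𝕜 E : Type*} [NontriviallyNormedField 𝕜] [CharZero 𝕜]

lemma eventuallyEq_zero_of_deriv_deriv_eq_smul [NormedAddCommGroup E] [NormedSpace 𝕜 E]
    [CompleteSpace E] {d : 𝕜 → E} {h : 𝕜 → 𝕜} {a : 𝕜} (hd : AnalyticAt 𝕜 d a)
    (hh : AnalyticAt 𝕜 h a) (hode : deriv (deriv d) =ᶠ[𝓝 a] h • d) (hd₀ : d a = 0)
    (hd₁ : deriv d a = 0) : d =ᶠ[𝓝 a] 0 := by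
  have order_deriv : analyticOrderAt (deriv d) a + 1 = analyticOrderAt d a := by
    simpa [hd₀] using hd.analyticOrderAt_deriv_add_one
  have order_deriv₂ : analyticOrderAt (deriv (deriv d)) a + 1 = analyticOrderAt (deriv d) a := by
    simpa [hd₁] using hd.deriv.analyticOrderAt_deriv_add_one
  rw [analyticOrderAt_congr hode, analyticOrderAt_smul hh hd] at order_deriv₂
  rw [← order_deriv₂] at order_deriv
  refine analyticOrderAt_eq_top.mp ?_
  generalize analyticOrderAt d a = n at *
  generalize analyticOrderAt h a = m at *
  cases n with
  | top => rfl
  | coe n =>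
    cases m with
    | top => exact absurd order_deriv (by simp)
    | coe m => norm_cast at order_deriv; omega

lemma eventuallyEq_of_deriv_deriv_eq_quadratic [CompleteSpace 𝕜] {f g : 𝕜 → 𝕜} {a α β : 𝕜}
    (hf : AnalyticAt 𝕜 f a) (hg : AnalyticAt 𝕜 g a)
    (hf₂ : ∀ᶠ z in 𝓝 a, deriv (deriv f) z = α * f z ^ 2 + β)
    (hg₂ : ∀ᶠ z in 𝓝 a, deriv (deriv g) z = α * g z ^ 2 + β)
    (h₀ : f a = g a) (h₁ : deriv f a = deriv g a) : f =ᶠ[𝓝 a] g := by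
  have deriv_sub_eq : deriv (f - g) =ᶠ[𝓝 a] deriv f - deriv g := by
    filter_upwards [hf.eventually_analyticAt, hg.eventually_analyticAt] with z hfz hgz
    exact deriv_sub hfz.differentiableAt hgz.differentiableAt
  have hode : deriv (deriv (f - g)) =ᶠ[𝓝 a] (fun z ↦ α * (f z + g z)) • (f - g) := by
    filter_upwards [deriv_sub_eq.deriv, hf₂, hg₂, hf.eventually_analyticAt,
      hg.eventually_analyticAt] with z hz hfz₂ hgz₂ hfz hgz
    rw [hz, deriv_sub hfz.deriv.differentiableAt hgz.deriv.differentiableAt, hfz₂, hgz₂]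
    simp only [smul_eq_mul, Pi.smul_apply', Pi.sub_apply]
    ring
  have hzero : f - g =ᶠ[𝓝 a] 0 :=
    eventuallyEq_zero_of_deriv_deriv_eq_smul (hf.sub hg) (analyticAt_const.mul (hf.add hg)) hode
      (by simp [h₀]) (by simp [deriv_sub_eq.eq_of_nhds, h₁])
  filter_upwards [hzero] with z hz using sub_eq_zero.mp hz

end LinearODE

lemma isPreconnected_compl_of_countable {s : Set ℂ} (hs : s.Countable) : IsPreconnected sᶜ :=
  (hs.isConnected_compl_of_one_lt_rank (by simp)).isPreconnected

section PeriodPairGeneral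

variable (L : PeriodPair)

lemma countable_lattice : (L.lattice : Set ℂ).Countable :=
  Set.countable_coe_iff.mp L.latticeEquivProd.injective.countable

variable {L} {z : ℂ}

lemma eventually_notMem_lattice (hz : z ∉ L.lattice) : ∀ᶠ w in 𝓝 z, w ∉ L.lattice :=
  L.isClosed_lattice.isOpen_compl.mem_nhds hz

variable (L) in
lemma eventually_nhdsNE_notMem_lattice (z : ℂ) : ∀ᶠ w in 𝓝[≠] z, w ∉ L.lattice := by
  filter_upwards [nhdsWithin_le_nhds (L.compl_lattice_sdiff_singleton_mem_nhds z),
    self_mem_nhdsWithin] with w hw hwz hwL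
  exact hw ⟨hwL, hwz⟩

lemma weierstrassP_add_of_mem {l : ℂ} (hl : l ∈ L.lattice) (z : ℂ) : ℘[L] (z + l) = ℘[L] z :=
  L.weierstrassP_add_coe z ⟨l, hl⟩

lemma derivWeierstrassP_add_of_mem {l : ℂ} (hl : l ∈ L.lattice) (z : ℂ) :
    ℘'[L] (z + l) = ℘'[L] z :=
  L.derivWeierstrassP_add_coe z ⟨l, hl⟩

lemma tendsto_weierstrassP_cobounded {l : ℂ} (hl : l ∈ L.lattice) :
    Tendsto ℘[L] (𝓝[≠] l) (Bornology.cobounded ℂ) := by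
  rw [tendsto_cobounded_iff_meromorphicOrderAt_neg (L.meromorphic_weierstrassP l),
    L.order_weierstrassP l hl]
  decide

lemma not_eventuallyEq_weierstrassP_of_continuousAt {f : ℂ → ℂ} {l : ℂ} (hl : l ∈ L.lattice)
    (hf : ContinuousAt f l) : ¬ f =ᶠ[𝓝[≠] l] ℘[L] := fun h ↦
  ((hf.tendsto.mono_left nhdsWithin_le_nhds).congr' h).not_tendsto
    (Metric.disjoint_nhds_cobounded (f l)) (tendsto_weierstrassP_cobounded hl)

lemma hasDerivAt_weierstrassP (hz : z ∉ L.lattice) : HasDerivAt ℘[L] (℘'[L] z) z := by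
  rw [← L.deriv_weierstrassP]
  exact (L.analyticOnNhd_weierstrassP z hz).differentiableAt.hasDerivAt

variable (L) in
lemma exists_derivWeierstrassP_ne_zero : ∃ z ∉ L.lattice, ℘'[L] z ≠ 0 := by
  by_contra! hzero
  have hconst : ∀ w ∉ L.lattice, ℘[L] (L.ω₁ / 2) = ℘[L] w := fun w hw ↦
    L.isClosed_lattice.isOpen_compl.is_const_of_deriv_eq_zero
      (isPreconnected_compl_of_countable (countable_lattice L)) L.differentiableOn_weierstrassP
      (L.deriv_weierstrassP ▸ hzero) L.ω₁_div_two_notMem_lattice hw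
  refine not_eventuallyEq_weierstrassP_of_continuousAt L.lattice.zero_mem
    (continuousAt_const (y := ℘[L] (L.ω₁ / 2))) ?_
  filter_upwards [eventually_nhdsNE_notMem_lattice L 0] with w hw using hconst w hw

/-- Differentiating `℘'² = 4℘³ - g₂℘ - g₃` determines `℘''` only up to the factor `2℘'`. -/
lemma deriv_derivWeierstrassP (hz : z ∉ L.lattice) :
    deriv ℘'[L] z = 6 * ℘[L] z ^ 2 - L.g₂ / 2 := by
  have hmul : ∀ w ∈ (L.lattice : Set ℂ)ᶜ,
      ℘'[L] w * (deriv ℘'[L] w - (6 * ℘[L] w ^ 2 - L.g₂ / 2)) = 0 := fun w hw ↦ by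
    have hsq : (fun w ↦ ℘'[L] w ^ 2) =ᶠ[𝓝 w] fun w ↦ 4 * ℘[L] w ^ 3 - L.g₂ * ℘[L] w - L.g₃ := by
      filter_upwards [eventually_notMem_lattice hw] with v hv using L.derivWeierstrassP_sq v hv
    have hlhs := (L.analyticOnNhd_derivWeierstrassP w hw).differentiableAt.hasDerivAt.pow 2
    have hrhs := ((((hasDerivAt_weierstrassP hw).pow 3).const_mul 4).sub
      ((hasDerivAt_weierstrassP hw).const_mul L.g₂)).sub_const L.g₃
    have := hlhs.unique (hrhs.congr_of_eventuallyEq hsq)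
    simp only [Nat.cast_ofNat, Nat.add_one_sub_one, pow_one] at this
    linear_combination this / 2
  have hP : AnalyticOnNhd ℂ ℘[L] L.latticeᶜ := L.analyticOnNhd_weierstrassP
  have hP' : AnalyticOnNhd ℂ ℘'[L] L.latticeᶜ := L.analyticOnNhd_derivWeierstrassP
  rcases hP'.eq_zero_or_eq_zero_of_mul_eq_zero
      (hP'.deriv.sub ((analyticOnNhd_const.mul (hP.pow 2)).sub analyticOnNhd_const)) hmul
      (isPreconnected_compl_of_countable (countable_lattice L)) with hzero | hzero
  · obtain ⟨w, hw, hne⟩ := exists_derivWeierstrassP_ne_zero L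
    exact absurd (hzero w hw) hne
  · exact sub_eq_zero.mp (hzero z hz)

lemma hasDerivAt_derivWeierstrassP (hz : z ∉ L.lattice) :
    HasDerivAt ℘'[L] (6 * ℘[L] z ^ 2 - L.g₂ / 2) z :=
  deriv_derivWeierstrassP hz ▸
    (L.analyticOnNhd_derivWeierstrassP z hz).differentiableAt.hasDerivAt

lemma eventuallyEq_weierstrassP_comp_add {a b : ℂ} (ha : a ∉ L.lattice) (hb : b ∉ L.lattice)
    (h₀ : ℘[L] a = ℘[L] b) (h₁ : ℘'[L] a = ℘'[L] b) :
    ℘[L] =ᶠ[𝓝 a] fun z ↦ ℘[L] (z + (b - a)) := by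
  have deriv_comp_add : deriv (fun z ↦ ℘[L] (z + (b - a))) = fun z ↦ ℘'[L] (z + (b - a)) := by
    ext z; rw [deriv_comp_add_const, L.deriv_weierstrassP]
  have hshift : Tendsto (· + (b - a)) (𝓝 a) (𝓝 b) := by
    simpa using (continuous_id.add_const (b - a)).tendsto a
  refine eventuallyEq_of_deriv_deriv_eq_quadratic (α := 6) (β := -(L.g₂ / 2))
    (L.analyticOnNhd_weierstrassP a ha)
    ((L.analyticOnNhd_weierstrassP b hb).comp_of_eq (by fun_prop) (by simp)) ?_ ?_
    (by simpa using h₀) (by simpa [deriv_comp_add] using h₁)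
  · filter_upwards [eventually_notMem_lattice ha] with z hz
    rw [L.deriv_weierstrassP, deriv_derivWeierstrassP hz, sub_eq_add_neg]
  · filter_upwards [hshift.eventually (eventually_notMem_lattice hb)] with z hz
    rw [deriv_comp_add, deriv_comp_add_const, deriv_derivWeierstrassP hz, sub_eq_add_neg]

/-- A translation fixing `℘` moves the pole at `0` to another pole. -/
lemma sub_mem_lattice_of_weierstrassP_eq {a b : ℂ} (ha : a ∉ L.lattice) (hb : b ∉ L.lattice)
    (h₀ : ℘[L] a = ℘[L] b) (h₁ : ℘'[L] a = ℘'[L] b) : b - a ∈ L.lattice := by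
  by_contra hba
  set t := b - a with ht
  have hQ : ∀ z, z + t ∉ L.lattice → AnalyticAt ℂ (fun z ↦ ℘[L] (z + t)) z := fun z hz ↦
    (L.analyticOnNhd_weierstrassP _ hz).comp_of_eq (by fun_prop) rfl
  have hcountable : ((L.lattice : Set ℂ) ∪ (· + t) ⁻¹' L.lattice).Countable :=
    (countable_lattice L).union ((countable_lattice L).preimage (add_left_injective t))
  have heqOn : EqOn ℘[L] (fun z ↦ ℘[L] (z + t))
      ((L.lattice : Set ℂ) ∪ (· + t) ⁻¹' L.lattice)ᶜ :=
    AnalyticOnNhd.eqOn_of_preconnected_of_eventuallyEq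
      (fun z hz ↦ L.analyticOnNhd_weierstrassP z fun h ↦ hz (.inl h))
      (fun z hz ↦ hQ z fun h ↦ hz (.inr h)) (isPreconnected_compl_of_countable hcountable)
      (z₀ := a) (by simp [ht, ha, hb]) (eventuallyEq_weierstrassP_comp_add ha hb h₀ h₁)
  have hshift : Tendsto (· + t) (𝓝[≠] 0) (𝓝 t) := by
    simpa using ((continuous_id.add_const t).tendsto (0 : ℂ)).mono_left nhdsWithin_le_nhds
  refine not_eventuallyEq_weierstrassP_of_continuousAt L.lattice.zero_mem
    (hQ 0 (by simpa using hba)).continuousAt ?_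
  filter_upwards [eventually_nhdsNE_notMem_lattice L 0,
    hshift.eventually (eventually_notMem_lattice hba)] with z hz hzt
  exact (heqOn (by simp [hz, hzt])).symm

lemma derivWeierstrassP_eq_zero_iff (hz : z ∉ L.lattice) : ℘'[L] z = 0 ↔ 2 * z ∈ L.lattice := by
  refine ⟨fun h ↦ ?_, fun h ↦ ?_⟩
  · have := sub_mem_lattice_of_weierstrassP_eq (L.lattice.neg_mem_iff.not.mpr hz) hz
      (L.weierstrassP_neg z) (by rw [L.derivWeierstrassP_neg, h, neg_zero])
    rwa [sub_neg_eq_add, ← two_mul] at this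
  · have : ℘'[L] (-z + 2 * z) = -℘'[L] z := by
      rw [derivWeierstrassP_add_of_mem h, L.derivWeierstrassP_neg]
    rwa [neg_add_eq_sub, two_mul, add_sub_cancel_left, self_eq_neg] at this

end PeriodPairGeneral

/-- `u` is a unit of the ring of complex multiplications of the lattice of `L`: multiplication by
`u` maps the lattice onto itself. Onto-ness is encoded by the equivalence instead of a condition
on `u⁻¹`. -/
def IsLatticeUnit (L : PeriodPair) (u : ℂ) : Prop :=
  ∀ z, u * z ∈ L.lattice ↔ z ∈ L.lattice

/-- The lattice of `L` is stable under complex conjugation, i.e. it is a real lattice. -/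
def IsConjInvariant (L : PeriodPair) : Prop :=
  ∀ z, conj z ∈ L.lattice ↔ z ∈ L.lattice

section LatticeSymmetries

variable {L : PeriodPair} {u : ℂ}

namespace IsLatticeUnit

lemma ne_zero (hu : IsLatticeUnit L u) : u ≠ 0 := by
  rintro rfl
  exact L.ω₁_div_two_notMem_lattice ((hu _).mp (by simp))

/-- Multiplication by a lattice unit as a permutation of the lattice, used to reindex lattice
sums. -/
def latticeEquiv (hu : IsLatticeUnit L u) : L.lattice ≃ L.lattice :=
  (Equiv.mulLeft₀ u hu.ne_zero).subtypeEquiv fun z ↦ (hu z).symm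

@[simp]
lemma coe_latticeEquiv (hu : IsLatticeUnit L u) (l : L.lattice) :
    (hu.latticeEquiv l : ℂ) = u * l :=
  rfl

lemma weierstrassP_mul (hu : IsLatticeUnit L u) (z : ℂ) : ℘[L] (u * z) = (u ^ 2)⁻¹ * ℘[L] z := by
  simp only [PeriodPair.weierstrassP]
  rw [← hu.latticeEquiv.tsum_eq, ← tsum_mul_left]
  refine tsum_congr fun l ↦ ?_
  simp only [coe_latticeEquiv, ← mul_sub, mul_pow, one_div, mul_inv]

lemma derivWeierstrassP_mul (hu : IsLatticeUnit L u) (z : ℂ) :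
    ℘'[L] (u * z) = (u ^ 3)⁻¹ * ℘'[L] z := by
  simp only [PeriodPair.derivWeierstrassP]
  rw [← hu.latticeEquiv.tsum_eq, mul_neg, ← tsum_mul_left]
  congr! 3 with l
  simp only [coe_latticeEquiv, ← mul_sub, mul_pow, div_eq_mul_inv, mul_inv]
  ring

lemma G_eq_zero (hu : IsLatticeUnit L u) {n : ℕ} (hn : u ^ n ≠ 1) : L.G n = 0 := by
  have hG : L.G n = (u ^ n)⁻¹ * L.G n := by
    conv_lhs => rw [PeriodPair.G, ← hu.latticeEquiv.tsum_eq]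
    simp only [coe_latticeEquiv, mul_pow, mul_inv, tsum_mul_left, PeriodPair.G]
  by_contra hne
  exact hn (inv_eq_one.mp (mul_right_cancel₀ hne (hG.symm.trans (one_mul _).symm)))

end IsLatticeUnit

namespace IsConjInvariant

/-- Complex conjugation as a permutation of a real lattice, used to reindex lattice sums. -/
def latticeEquiv (hL : IsConjInvariant L) : L.lattice ≃ L.lattice :=
  (starRingAut (R := ℂ)).toEquiv.subtypeEquiv fun z ↦ (hL z).symm

@[simp]
lemma coe_latticeEquiv (hL : IsConjInvariant L) (l : L.lattice) :
    (hL.latticeEquiv l : ℂ) = conj (l : ℂ) :=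
  rfl

lemma weierstrassP_conj (hL : IsConjInvariant L) (z : ℂ) : ℘[L] (conj z) = conj (℘[L] z) := by
  simp only [PeriodPair.weierstrassP]
  rw [← hL.latticeEquiv.tsum_eq, Complex.conj_tsum]
  exact tsum_congr fun l ↦ by simp

lemma derivWeierstrassP_conj (hL : IsConjInvariant L) (z : ℂ) :
    ℘'[L] (conj z) = conj (℘'[L] z) := by
  simp only [PeriodPair.derivWeierstrassP]
  rw [← hL.latticeEquiv.tsum_eq, map_neg, Complex.conj_tsum]
  congr! 3 with l
  simp [Complex.conj_ofNat 2]

lemma ofReal_re_weierstrassP (hL : IsConjInvariant L) (x : ℝ) : ((℘[L] x).re : ℂ) = ℘[L] x :=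
  conj_eq_iff_re.mp (by rw [← hL.weierstrassP_conj, conj_ofReal])

lemma ofReal_re_derivWeierstrassP (hL : IsConjInvariant L) (x : ℝ) :
    ((℘'[L] x).re : ℂ) = ℘'[L] x :=
  conj_eq_iff_re.mp (by rw [← hL.derivWeierstrassP_conj, conj_ofReal])

end IsConjInvariant

end LatticeSymmetries

section SixthRootOfUnity

lemma τ_re : τ.re = 1 / 2 := by
  rw [τ, ← Real.cos_pi_div_three, ← exp_ofReal_mul_I_re]
  congr 2
  push_cast
  ring

lemma τ_im : τ.im = √3 / 2 := by
  rw [τ, ← Real.sin_pi_div_three, ← exp_ofReal_mul_I_im]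
  congr 2
  push_cast
  ring

lemma τ_cube : τ ^ 3 = -1 := by
  rw [τ, ← Complex.exp_nat_mul, ← Complex.exp_pi_mul_I]
  congr 1
  push_cast
  ring

lemma τ_sq : τ ^ 2 = τ - 1 := by
  have hne : τ + 1 ≠ 0 := fun h ↦ by
    have := congrArg re h
    norm_num [τ_re] at this
  have hmul : (τ + 1) * (τ ^ 2 - (τ - 1)) = 0 := by linear_combination τ_cube
  exact sub_eq_zero.mp ((mul_eq_zero.mp hmul).resolve_left hne)

lemma τ_ne_zero : τ ≠ 0 := exp_ne_zero _

lemma conj_τ : conj τ = 1 - τ := by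
  apply Complex.ext
  · norm_num [τ_re]
  · simp

/-- `√-3 = i√3`, written in the ring `ℤ[τ]` of complex multiplications of hexagonal lattices. -/
def sqrtNegThree : ℂ := 2 * τ - 1

lemma sqrtNegThree_sq : sqrtNegThree ^ 2 = -3 := by
  rw [sqrtNegThree]; linear_combination 4 * τ_sq

lemma sqrtNegThree_ne_zero : sqrtNegThree ≠ 0 := fun h ↦ by
  simpa [h] using sqrtNegThree_sq

lemma τ_sq_sub_one : τ ^ 2 - 1 = τ * sqrtNegThree := by
  rw [sqrtNegThree]; linear_combination -τ_sq

lemma pow_three_eq_pow_three_iff {x y : ℂ} :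
    x ^ 3 = y ^ 3 ↔ x = y ∨ x = τ ^ 2 * y ∨ x = τ ^ 4 * y := by
  have hfactor : x ^ 3 - y ^ 3 = (x - y) * ((x - τ ^ 2 * y) * (x - τ ^ 4 * y)) := by
    linear_combination (x - y) * (x * y * (τ ^ 2 + τ + 1) * τ_sq - y ^ 2 * (τ ^ 3 - 1) * τ_cube)
  rw [← sub_eq_zero, hfactor, mul_eq_zero, mul_eq_zero, sub_eq_zero, sub_eq_zero, sub_eq_zero]

end SixthRootOfUnity

section ComplexMultiplication

variable {L : PeriodPair} {z : ℂ}

lemma weierstrassP_τ_sq_mul (hτ : IsLatticeUnit L τ) (z : ℂ) :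
    ℘[L] (τ ^ 2 * z) = τ ^ 2 * ℘[L] z := by
  have hτ6 : (τ ^ 2)⁻¹ * (τ ^ 2)⁻¹ = τ ^ 2 := by
    field_simp [τ_ne_zero]
    linear_combination (1 - τ ^ 3) * τ_cube
  rw [pow_two τ, mul_assoc, hτ.weierstrassP_mul, hτ.weierstrassP_mul, ← mul_assoc, hτ6, pow_two]

lemma derivWeierstrassP_τ_sq_mul (hτ : IsLatticeUnit L τ) (z : ℂ) :
    ℘'[L] (τ ^ 2 * z) = ℘'[L] z := by
  rw [pow_two, mul_assoc, hτ.derivWeierstrassP_mul, hτ.derivWeierstrassP_mul, τ_cube]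
  ring

lemma τ_sq_mul_mem_lattice_iff (hτ : IsLatticeUnit L τ) :
    τ ^ 2 * z ∈ L.lattice ↔ z ∈ L.lattice := by
  rw [pow_two, mul_assoc, hτ, hτ]

lemma sqrtNegThree_mul_mem_lattice (hτ : IsLatticeUnit L τ) (hz : z ∈ L.lattice) :
    sqrtNegThree * z ∈ L.lattice := by
  have : sqrtNegThree * z = τ * z + τ * z - z := by rw [sqrtNegThree]; ring
  rw [this]
  exact L.lattice.sub_mem (L.lattice.add_mem ((hτ z).mpr hz) ((hτ z).mpr hz)) hz

lemma τ_sq_mul_sub_mem_lattice_iff (hτ : IsLatticeUnit L τ) :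
    τ ^ 2 * z - z ∈ L.lattice ↔ sqrtNegThree * z ∈ L.lattice := by
  rw [← hτ (sqrtNegThree * z), ← mul_assoc, ← τ_sq_sub_one, sub_one_mul]

lemma g₂_eq_zero (hτ : IsLatticeUnit L τ) : L.g₂ = 0 := by
  have hτ4 : τ ^ 4 ≠ 1 := fun h ↦ by
    have : τ = -1 := by linear_combination τ * τ_cube - h
    have := congrArg re this
    norm_num [τ_re] at this
  rw [PeriodPair.g₂, hτ.G_eq_zero hτ4, mul_zero]

lemma derivWeierstrassP_sq_of_τ (hτ : IsLatticeUnit L τ) (hz : z ∉ L.lattice) :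
    ℘'[L] z ^ 2 = 4 * ℘[L] z ^ 3 - L.g₃ := by
  rw [L.derivWeierstrassP_sq z hz, g₂_eq_zero hτ, zero_mul, sub_zero]

lemma hasDerivAt_derivWeierstrassP_of_τ (hτ : IsLatticeUnit L τ) (hz : z ∉ L.lattice) :
    HasDerivAt ℘'[L] (6 * ℘[L] z ^ 2) z := by
  simpa [g₂_eq_zero hτ] using hasDerivAt_derivWeierstrassP hz

lemma weierstrassP_eq_zero_iff (hτ : IsLatticeUnit L τ) (hz : z ∉ L.lattice) :
    ℘[L] z = 0 ↔ sqrtNegThree * z ∈ L.lattice := by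
  rw [← τ_sq_mul_sub_mem_lattice_iff hτ]
  refine ⟨fun h ↦ ?_, fun h ↦ ?_⟩
  · exact sub_mem_lattice_of_weierstrassP_eq hz ((τ_sq_mul_mem_lattice_iff hτ).not.mpr hz)
      (by rw [weierstrassP_τ_sq_mul hτ, h, mul_zero]) (derivWeierstrassP_τ_sq_mul hτ z).symm
  · have hfixed : ℘[L] z = τ ^ 2 * ℘[L] z := by
      rw [← weierstrassP_τ_sq_mul hτ, ← weierstrassP_add_of_mem h z, add_sub_cancel]
    have hmul : τ * sqrtNegThree * ℘[L] z = 0 := by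
      rw [← τ_sq_sub_one, sub_one_mul, ← hfixed, sub_self]
    simpa [τ_ne_zero, sqrtNegThree_ne_zero] using hmul

lemma derivWeierstrassP_eq_iff (hτ : IsLatticeUnit L τ) {c : ℂ} (hz : z ∉ L.lattice)
    (hc : c ∉ L.lattice) :
    ℘'[L] z = ℘'[L] c ↔
      z - c ∈ L.lattice ∨ z - τ ^ 2 * c ∈ L.lattice ∨ z - τ ^ 4 * c ∈ L.lattice := by
  have hτ4 : ∀ w, τ ^ 4 * w = τ ^ 2 * (τ ^ 2 * w) := fun w ↦ by ring
  have hc₂ := (τ_sq_mul_mem_lattice_iff hτ).not.mpr hc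
  have hc₄ := (τ_sq_mul_mem_lattice_iff hτ).not.mpr hc₂
  have hP'c₂ := derivWeierstrassP_τ_sq_mul hτ c
  have hP'c₄ := (derivWeierstrassP_τ_sq_mul hτ (τ ^ 2 * c)).trans hP'c₂
  have eq_of_sub_mem : ∀ w, z - w ∈ L.lattice → ℘'[L] z = ℘'[L] w := fun w h ↦ by
    rw [← derivWeierstrassP_add_of_mem h w, add_sub_cancel]
  refine ⟨fun h ↦ ?_, ?_⟩
  · have hcube : ℘[L] z ^ 3 = ℘[L] c ^ 3 := by
      linear_combination (derivWeierstrassP_sq_of_τ hτ hc - derivWeierstrassP_sq_of_τ hτ hz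
        + (℘'[L] z + ℘'[L] c) * h) / 4
    simp only [pow_three_eq_pow_three_iff, hτ4, ← weierstrassP_τ_sq_mul hτ] at hcube
    rw [hτ4]
    refine hcube.imp (fun hP ↦ ?_) (Or.imp (fun hP ↦ ?_) fun hP ↦ ?_)
    · exact sub_mem_lattice_of_weierstrassP_eq hc hz hP.symm h.symm
    · exact sub_mem_lattice_of_weierstrassP_eq hc₂ hz hP.symm (hP'c₂.trans h.symm)
    · exact sub_mem_lattice_of_weierstrassP_eq hc₄ hz hP.symm (hP'c₄.trans h.symm)
  · rw [hτ4]
    rintro (h | h | h)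
    · exact eq_of_sub_mem _ h
    · exact (eq_of_sub_mem _ h).trans hP'c₂
    · exact (eq_of_sub_mem _ h).trans hP'c₄

variable (L) in
/-- The abscissa of the image of `(℘, ℘')` under the 3-isogeny of `y² = 4x³ - g₃` with kernel
`x = 0`; `weierstrassP_sqrtNegThree_mul` identifies it with multiplication by `√-3`. -/
def isogenyAbscissa (z : ℂ) : ℂ := (L.g₃ - ℘[L] z ^ 3) / (3 * ℘[L] z ^ 2)

lemma hasDerivAt_isogenyAbscissa (hz : z ∉ L.lattice) (hP : ℘[L] z ≠ 0) :
    HasDerivAt (isogenyAbscissa L)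
      (-(℘'[L] z * (2 * L.g₃ + ℘[L] z ^ 3)) / (3 * ℘[L] z ^ 3)) z := by
  have hPz := hasDerivAt_weierstrassP hz
  refine (((hPz.pow 3).const_sub L.g₃).div ((hPz.pow 2).const_mul 3) (by simpa)).congr_deriv ?_
  simp only [Pi.pow_apply]
  field_simp
  ring

lemma hasDerivAt_deriv_isogenyAbscissa (hτ : IsLatticeUnit L τ) (hz : z ∉ L.lattice)
    (hP : ℘[L] z ≠ 0) :
    HasDerivAt (deriv (isogenyAbscissa L)) (-18 * isogenyAbscissa L z ^ 2) z := by
  have hPz := hasDerivAt_weierstrassP hz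
  have hderiv : deriv (isogenyAbscissa L) =ᶠ[𝓝 z]
      fun w ↦ -(℘'[L] w * (2 * L.g₃ + ℘[L] w ^ 3)) / (3 * ℘[L] w ^ 3) := by
    filter_upwards [eventually_notMem_lattice hz, hPz.continuousAt.eventually_ne hP] with w hw hPw
    exact (hasDerivAt_isogenyAbscissa hw hPw).deriv
  refine (((((hasDerivAt_derivWeierstrassP_of_τ hτ hz).mul ((hPz.pow 3).const_add _)).neg).div
    ((hPz.pow 3).const_mul 3) (by simpa)).congr_of_eventuallyEq hderiv).congr_deriv ?_
  simp only [isogenyAbscissa, Pi.pow_apply, Pi.neg_apply, Pi.mul_apply]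
  field_simp
  linear_combination 18 * L.g₃ * ℘[L] z ^ 2 * derivWeierstrassP_sq_of_τ hτ hz

lemma hasDerivAt_weierstrassP_mul {u : ℂ} (hz : u * z ∉ L.lattice) :
    HasDerivAt (fun w ↦ ℘[L] (u * w)) (u * ℘'[L] (u * z)) z :=
  ((hasDerivAt_weierstrassP hz).comp z ((hasDerivAt_id z).const_mul u)).congr_deriv (by ring)

lemma eventually_mul_notMem_lattice {u : ℂ} (hz : u * z ∉ L.lattice) :
    ∀ᶠ w in 𝓝 z, u * w ∉ L.lattice :=
  (continuous_const_mul u).continuousAt.eventually (eventually_notMem_lattice hz)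

lemma hasDerivAt_deriv_weierstrassP_sqrtNegThree_mul (hτ : IsLatticeUnit L τ)
    (hz : sqrtNegThree * z ∉ L.lattice) :
    HasDerivAt (deriv fun w ↦ ℘[L] (sqrtNegThree * w))
      (-18 * ℘[L] (sqrtNegThree * z) ^ 2) z := by
  have hderiv : deriv (fun w ↦ ℘[L] (sqrtNegThree * w)) =ᶠ[𝓝 z]
      fun w ↦ sqrtNegThree * ℘'[L] (sqrtNegThree * w) := by
    filter_upwards [eventually_mul_notMem_lattice hz] with w hw
    exact (hasDerivAt_weierstrassP_mul hw).deriv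
  refine ((((hasDerivAt_derivWeierstrassP_of_τ hτ hz).comp z ((hasDerivAt_id z).const_mul
    sqrtNegThree)).const_mul sqrtNegThree).congr_of_eventuallyEq hderiv).congr_deriv ?_
  linear_combination 6 * ℘[L] (sqrtNegThree * z) ^ 2 * sqrtNegThree_sq

lemma analyticAt_weierstrassP_mul {u : ℂ} (hz : u * z ∉ L.lattice) :
    AnalyticAt ℂ (fun w ↦ ℘[L] (u * w)) z :=
  (L.analyticOnNhd_weierstrassP _ hz).comp_of_eq (by fun_prop) rfl

lemma analyticAt_isogenyAbscissa (hz : z ∉ L.lattice) (hP : ℘[L] z ≠ 0) :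
    AnalyticAt ℂ (isogenyAbscissa L) z :=
  have hPz := L.analyticOnNhd_weierstrassP z hz
  (analyticAt_const.sub (hPz.pow 3)).div (analyticAt_const.mul (hPz.pow 2)) (by simpa)

variable (L) in
lemma derivWeierstrassP_ω₁_div_two : ℘'[L] (L.ω₁ / 2) = 0 := by
  rw [derivWeierstrassP_eq_zero_iff L.ω₁_div_two_notMem_lattice, mul_div_cancel₀ _ two_ne_zero]
  exact L.ω₁_mem_lattice

lemma sqrtNegThree_mul_ω₁_div_two_sub_mem_lattice (hτ : IsLatticeUnit L τ) :
    sqrtNegThree * (L.ω₁ / 2) - L.ω₁ / 2 ∈ L.lattice := by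
  have : sqrtNegThree * (L.ω₁ / 2) - L.ω₁ / 2 = τ * L.ω₁ - L.ω₁ := by rw [sqrtNegThree]; ring
  rw [this]
  exact L.lattice.sub_mem ((hτ _).mpr L.ω₁_mem_lattice) L.ω₁_mem_lattice

lemma sqrtNegThree_mul_ω₁_div_two_notMem_lattice (hτ : IsLatticeUnit L τ) :
    sqrtNegThree * (L.ω₁ / 2) ∉ L.lattice := by
  rw [← sub_add_cancel (sqrtNegThree * (L.ω₁ / 2)) (L.ω₁ / 2),
    L.lattice.add_mem_iff_right (sqrtNegThree_mul_ω₁_div_two_sub_mem_lattice hτ)]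
  exact L.ω₁_div_two_notMem_lattice

lemma weierstrassP_sqrtNegThree_mul_eventuallyEq (hτ : IsLatticeUnit L τ) :
    (fun z ↦ ℘[L] (sqrtNegThree * z)) =ᶠ[𝓝 (L.ω₁ / 2)] isogenyAbscissa L := by
  have hhalf := L.ω₁_div_two_notMem_lattice
  have hP' := derivWeierstrassP_ω₁_div_two L
  have hmul_notMem := sqrtNegThree_mul_ω₁_div_two_notMem_lattice hτ
  have hmem := sqrtNegThree_mul_ω₁_div_two_sub_mem_lattice hτ
  have hmul := (add_sub_cancel (L.ω₁ / 2) (sqrtNegThree * (L.ω₁ / 2))).symm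
  have hP : ℘[L] (L.ω₁ / 2) ≠ 0 := (weierstrassP_eq_zero_iff hτ hhalf).not.mpr hmul_notMem
  refine eventuallyEq_of_deriv_deriv_eq_quadratic (α := -18) (β := 0)
    (analyticAt_weierstrassP_mul hmul_notMem) (analyticAt_isogenyAbscissa hhalf hP) ?_ ?_ ?_ ?_
  · filter_upwards [eventually_mul_notMem_lattice hmul_notMem] with z hz
    rw [(hasDerivAt_deriv_weierstrassP_sqrtNegThree_mul hτ hz).deriv, add_zero]
  · filter_upwards [eventually_notMem_lattice hhalf,
      (hasDerivAt_weierstrassP hhalf).continuousAt.eventually_ne hP] with z hz hPz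
    rw [(hasDerivAt_deriv_isogenyAbscissa hτ hz hPz).deriv, add_zero]
  · rw [hmul, weierstrassP_add_of_mem hmem, isogenyAbscissa, eq_div_iff (by simpa)]
    linear_combination ℘'[L] (L.ω₁ / 2) * hP' - derivWeierstrassP_sq_of_τ hτ hhalf
  · rw [(hasDerivAt_weierstrassP_mul hmul_notMem).deriv,
      (hasDerivAt_isogenyAbscissa hhalf hP).deriv,
      hmul, derivWeierstrassP_add_of_mem hmem, hP']
    simp

lemma weierstrassP_sqrtNegThree_mul (hτ : IsLatticeUnit L τ) (hz : sqrtNegThree * z ∉ L.lattice) :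
    ℘[L] (sqrtNegThree * z) = isogenyAbscissa L z := by
  have hcountable : ((sqrtNegThree * ·) ⁻¹' (L.lattice : Set ℂ)).Countable :=
    (countable_lattice L).preimage (mul_right_injective₀ sqrtNegThree_ne_zero)
  have notMem : ∀ w, sqrtNegThree * w ∉ L.lattice → w ∉ L.lattice := fun w ↦
    mt (sqrtNegThree_mul_mem_lattice hτ)
  refine AnalyticOnNhd.eqOn_of_preconnected_of_eventuallyEq
    (fun w hw ↦ analyticAt_weierstrassP_mul hw)
    (fun w hw ↦ analyticAt_isogenyAbscissa (notMem w hw)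
      ((weierstrassP_eq_zero_iff hτ (notMem w hw)).not.mpr hw))
    (isPreconnected_compl_of_countable hcountable) (sqrtNegThree_mul_ω₁_div_two_notMem_lattice hτ)
    (weierstrassP_sqrtNegThree_mul_eventuallyEq hτ) hz

/-- `√-3` maps a 3-torsion point outside its kernel into the kernel, the zeros of `℘`. -/
lemma weierstrassP_cube_eq_g₃ (hτ : IsLatticeUnit L τ) (hz : sqrtNegThree * z ∉ L.lattice)
    (hz₃ : 3 * z ∈ L.lattice) : ℘[L] z ^ 3 = L.g₃ := by
  have hP : ℘[L] z ≠ 0 :=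
    (weierstrassP_eq_zero_iff hτ (mt (sqrtNegThree_mul_mem_lattice hτ) hz)).not.mpr hz
  have hzero : ℘[L] (sqrtNegThree * z) = 0 := by
    rw [weierstrassP_eq_zero_iff hτ hz, ← mul_assoc, ← pow_two, sqrtNegThree_sq, neg_mul]
    exact L.lattice.neg_mem hz₃
  rw [weierstrassP_sqrtNegThree_mul hτ hz, isogenyAbscissa, div_eq_zero_iff] at hzero
  exact (sub_eq_zero.mp (hzero.resolve_right (by simpa))).symm

end ComplexMultiplication

section RealLine

variable {L : PeriodPair} {ω x : ℝ}

variable (L) in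
lemma tendsto_re_weierstrassP_nhdsGT_zero :
    Tendsto (fun x : ℝ ↦ (℘[L] x).re) (𝓝[>] 0) atTop := by
  have hsplit (x : ℝ) : (L.weierstrassPExcept 0 x).re + x⁻¹ ^ 2 = (℘[L] x).re := by
    have := congrArg re (L.weierstrassPExcept_add 0 x)
    simpa [← ofReal_pow, ← ofReal_inv] using this
  have hregular : Tendsto (fun x : ℝ ↦ (L.weierstrassPExcept 0 x).re) (𝓝[>] 0)
      (𝓝 (L.weierstrassPExcept 0 (0 : ℝ)).re) := by
    have hcont : ContinuousAt (L.weierstrassPExcept 0) (0 : ℝ) := by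
      simpa using (L.analyticAt_weierstrassPExcept 0).continuousAt
    exact ((continuous_re.continuousAt.comp hcont).comp
      continuous_ofReal.continuousAt).tendsto.mono_left nhdsWithin_le_nhds
  exact (hregular.add_atTop ((tendsto_pow_atTop two_ne_zero).comp tendsto_inv_nhdsGT_zero)).congr
    hsplit

lemma hasDerivAt_re_weierstrassP (hx : (x : ℂ) ∉ L.lattice) :
    HasDerivAt (fun x : ℝ ↦ (℘[L] x).re) (℘'[L] x).re x :=
  (hasDerivAt_weierstrassP hx).real_of_complex

/-- By Darboux `℘'` has a constant sign, and a positive one is incompatible with the pole at `0`. -/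
lemma re_derivWeierstrassP_neg (hL : IsConjInvariant L)
    (hω : ∀ x ∈ Ioo 0 ω, (x : ℂ) ∉ L.lattice) (hx : x ∈ Ioo 0 (ω / 2)) : (℘'[L] x).re < 0 := by
  have hderiv : ∀ y ∈ Ioo 0 (ω / 2), HasDerivAt (fun x : ℝ ↦ (℘[L] x).re) (℘'[L] y).re y :=
    fun y hy ↦ hasDerivAt_re_weierstrassP (hω y ⟨hy.1, by linarith [hy.1, hy.2]⟩)
  have hne : ∀ y ∈ Ioo 0 (ω / 2), (℘'[L] y).re ≠ 0 := fun y hy h ↦ by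
    rw [← ofReal_eq_zero, hL.ofReal_re_derivWeierstrassP,
      derivWeierstrassP_eq_zero_iff (hω y ⟨hy.1, by linarith [hy.1, hy.2]⟩)] at h
    exact hω (2 * y) ⟨by linarith [hy.1], by linarith [hy.2]⟩ (by exact_mod_cast h)
  refine (hasDerivWithinAt_forall_lt_or_forall_gt_of_forall_ne (convex_Ioo 0 (ω / 2))
    (fun y hy ↦ (hderiv y hy).hasDerivWithinAt) hne).elim (· x hx) fun hpos ↦ ?_
  have hmono : StrictMonoOn (fun x : ℝ ↦ (℘[L] x).re) (Ioo 0 (ω / 2)) :=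
    strictMonoOn_of_deriv_pos (convex_Ioo _ _)
      (fun y hy ↦ (hderiv y hy).continuousAt.continuousWithinAt) fun y hy ↦ by
        rw [interior_Ioo] at hy
        rw [(hderiv y hy).deriv]
        exact hpos y hy
  obtain ⟨y, hy_large, hy⟩ := (((tendsto_re_weierstrassP_nhdsGT_zero L).eventually_gt_atTop
    (℘[L] x).re).and (Ioo_mem_nhdsGT hx.1)).exists
  exact absurd (hmono ⟨hy.1, hy.2.trans hx.2⟩ hx hy.2) hy_large.not_gt

end RealLine

section PeriodIntegral

lemma setIntegral_rpow_mul_one_sub_rpow {a b : ℝ} (ha : 0 < a) (hb : 0 < b) :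
    ∫ s in Ioo (0 : ℝ) 1, s ^ (a - 1) * (1 - s) ^ (b - 1) =
      Real.Gamma a * Real.Gamma b / Real.Gamma (a + b) := by
  have hofReal : ∀ s ∈ Ioc (0 : ℝ) 1, (s : ℂ) ^ ((a : ℂ) - 1) * (1 - s : ℂ) ^ ((b : ℂ) - 1) =
      ((s ^ (a - 1) * (1 - s) ^ (b - 1) : ℝ) : ℂ) := fun s hs ↦ by
    rw [ofReal_mul, ofReal_cpow hs.1.le, ofReal_cpow (sub_nonneg.mpr hs.2)]
    push_cast
    rfl
  rw [← ProbabilityTheory.beta, ProbabilityTheory.beta_eq_betaIntegralReal a b ha hb, betaIntegral,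
    intervalIntegral.integral_of_le zero_le_one, setIntegral_congr_fun measurableSet_Ioc hofReal,
    integral_complex_ofReal, ofReal_re, integral_Ioc_eq_integral_Ioo]

lemma Gamma_sixth_mul_Gamma_half_div_Gamma_two_thirds :
    Real.Gamma (1 / 6) * Real.Gamma (1 / 2) / Real.Gamma (2 / 3) =
      3 * 2 ^ (-(1 / 3) : ℝ) * ϖ₀ := by
  have hdup : Real.Gamma (1 / 6) * Real.Gamma (2 / 3) =
      Real.Gamma (1 / 3) * 2 ^ (2 / 3 : ℝ) * √Real.pi := by
    convert! Real.Gamma_mul_Gamma_add_half (1 / 6) using 3 <;> norm_num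
  have hrefl : Real.Gamma (1 / 3) * Real.Gamma (2 / 3) * √3 = 2 * Real.pi := by
    have := Real.Gamma_mul_Gamma_one_sub (1 / 3)
    rw [mul_one_div, Real.sin_pi_div_three, show (1 - 1 / 3 : ℝ) = 2 / 3 by norm_num] at this
    rw [this]
    field_simp
  have htwo : (2 : ℝ) ^ (2 / 3 : ℝ) = 2 * 2 ^ (-(1 / 3) : ℝ) := by
    rw [← Real.rpow_one_add' zero_le_two (by norm_num)]
    norm_num
  have hΓ : Real.Gamma (2 / 3) ≠ 0 := (Real.Gamma_pos_of_pos (by norm_num)).ne'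
  have hpi := Real.sq_sqrt Real.pi_pos.le
  have hthree : √3 ^ 2 = (3 : ℝ) := Real.sq_sqrt zero_le_three
  have hrefl_sq : 3 * (Real.Gamma (1 / 3) * Real.Gamma (2 / 3)) ^ 2 = 4 * Real.pi ^ 2 := by
    linear_combination (Real.Gamma (1 / 3) * Real.Gamma (2 / 3) * √3 + 2 * Real.pi) * hrefl -
      (Real.Gamma (1 / 3) * Real.Gamma (2 / 3)) ^ 2 * hthree
  rw [Real.Gamma_one_half_eq, div_eq_iff hΓ, ϖ₀]
  field_simp
  apply mul_right_cancel₀ hΓ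
  linear_combination 2 * Real.pi * √Real.pi * hdup +
    2 * Real.pi * Real.Gamma (1 / 3) * 2 ^ (2 / 3 : ℝ) * hpi +
    2 * Real.pi ^ 2 * Real.Gamma (1 / 3) * htwo -
    Real.Gamma (1 / 3) * 2 ^ (-(1 / 3) : ℝ) * hrefl_sq

lemma deriv_mul_rpow_mul_one_sub_rpow {e p q : ℝ} (he : 0 < e) (hp : 0 < p) (hq : q < 0)
    (hsq : q ^ 2 = 4 * (p ^ 3 - e ^ 3)) :
    -(3 * e ^ 3 * q / p ^ 4) *
      (((e / p) ^ 3) ^ (1 / 6 - 1 : ℝ) * (1 - (e / p) ^ 3) ^ (1 / 2 - 1 : ℝ)) = 6 * √e := by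
  obtain ⟨a, ha, rfl⟩ : ∃ a, 0 < a ∧ p = a ^ 2 :=
    ⟨√p, Real.sqrt_pos.mpr hp, (Real.sq_sqrt hp.le).symm⟩
  obtain ⟨b, hb, rfl⟩ : ∃ b, 0 < b ∧ e = b ^ 2 :=
    ⟨√e, Real.sqrt_pos.mpr he, (Real.sq_sqrt he.le).symm⟩
  have hba : 0 < b / a := div_pos hb ha
  have hqa : 0 < -q / (2 * a ^ 3) := div_pos (neg_pos.mpr hq) (by positivity)
  have hs : (b ^ 2 / a ^ 2) ^ 3 = (b / a) ^ 6 := by ring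
  have hone_sub : 1 - (b / a) ^ 6 = (-q / (2 * a ^ 3)) ^ 2 := by
    rw [div_pow (-q), neg_sq, hsq]
    field_simp
    norm_num
  have hpow_s : ((b / a) ^ 6) ^ (1 / 6 - 1 : ℝ) = ((b / a) ^ 5)⁻¹ := by
    rw [← Real.rpow_natCast_mul hba.le, ← Real.rpow_natCast, ← Real.rpow_neg hba.le]
    norm_num
  have hpow_one_sub : ((-q / (2 * a ^ 3)) ^ 2) ^ (1 / 2 - 1 : ℝ) = (-q / (2 * a ^ 3))⁻¹ := by
    rw [← Real.rpow_natCast_mul hqa.le, ← Real.rpow_neg_one]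
    norm_num
  rw [hs, hone_sub, hpow_s, hpow_one_sub, Real.sqrt_sq hb.le]
  have := hq.ne
  field_simp
  norm_num

lemma image_Ioo_eq_Ioo_of_tendsto {f : ℝ → ℝ} {a b c d : ℝ} (hab : a < b)
    (hf : ContinuousOn f (Ioo a b)) (hmaps : MapsTo f (Ioo a b) (Ioo c d))
    (ha : Tendsto f (𝓝[>] a) (𝓝 c)) (hb : Tendsto f (𝓝[<] b) (𝓝 d)) :
    f '' Ioo a b = Ioo c d := by
  have := left_nhdsWithin_Ioo_neBot hab
  have := right_nhdsWithin_Ioo_neBot hab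
  rw [← nhdsWithin_Ioo_eq_nhdsGT hab] at ha
  rw [← nhdsWithin_Ioo_eq_nhdsLT hab] at hb
  exact hmaps.image_subset.antisymm <| isPreconnected_Ioo.intermediate_value_Ioo
    (le_principal_iff.mpr self_mem_nhdsWithin) (le_principal_iff.mpr self_mem_nhdsWithin) hf ha hb

/-- Substitute `s = (e / p x) ^ 3`. -/
lemma setIntegral_eq_of_deriv_sq_eq_cubic {p q : ℝ → ℝ} {e T : ℝ} (he : 0 < e) (hT : 0 < T)
    (hderiv : ∀ x ∈ Ioo 0 T, HasDerivAt p (q x) x) (hneg : ∀ x ∈ Ioo 0 T, q x < 0)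
    (hsq : ∀ x ∈ Ioo 0 T, q x ^ 2 = 4 * (p x ^ 3 - e ^ 3))
    (hzero : Tendsto p (𝓝[>] 0) atTop) (hend : Tendsto p (𝓝[<] T) (𝓝 e)) :
    ∫ s in Ioo (0 : ℝ) 1, s ^ (1 / 6 - 1 : ℝ) * (1 - s) ^ (1 / 2 - 1 : ℝ) = 6 * T * √e := by
  have hlt : ∀ x ∈ Ioo 0 T, e < p x := fun x hx ↦ by
    have : e ^ 3 < p x ^ 3 := by linarith [hsq x hx, sq_pos_of_neg (hneg x hx)]
    exact (Odd.strictMono_pow (by decide)).lt_iff_lt.mp this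
  have hpos : ∀ x ∈ Ioo 0 T, 0 < p x := fun x hx ↦ he.trans (hlt x hx)
  have hderiv_s : ∀ x ∈ Ioo 0 T,
      HasDerivAt (fun x ↦ (e / p x) ^ 3) (-(3 * e ^ 3 * q x / p x ^ 4)) x := fun x hx ↦ by
    have := (hpos x hx).ne'
    refine (((hasDerivAt_const x e).div (hderiv x hx) this).pow 3).congr_deriv ?_
    simp only [Pi.div_apply, Nat.cast_ofNat, Nat.add_one_sub_one]
    field_simp
    ring
  have hmono : MonotoneOn (fun x ↦ (e / p x) ^ 3) (Ioo 0 T) :=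
    monotoneOn_of_deriv_nonneg (convex_Ioo _ _)
      (fun x hx ↦ (hderiv_s x hx).continuousAt.continuousWithinAt)
      (fun x hx ↦ (hderiv_s x (interior_subset hx)).differentiableAt.differentiableWithinAt)
      fun x hx ↦ by
        rw [interior_Ioo] at hx
        have := hpos x hx
        rw [(hderiv_s x hx).deriv, ← neg_div, ← mul_neg]
        have := neg_pos.mpr (hneg x hx)
        positivity
  have himage : (fun x ↦ (e / p x) ^ 3) '' Ioo 0 T = Ioo 0 1 := by
    refine image_Ioo_eq_Ioo_of_tendsto hT
      (fun x hx ↦ (hderiv_s x hx).continuousAt.continuousWithinAt) (fun x hx ↦ ?_) ?_ ?_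
    · have := div_pos he (hpos x hx)
      exact ⟨pow_pos this 3,
        pow_lt_one₀ this.le ((div_lt_one (hpos x hx)).mpr (hlt x hx)) (by simp)⟩
    · simpa using (hzero.const_div_atTop e).pow 3
    · simpa [he.ne'] using ((tendsto_const_nhds (x := e)).div hend he.ne').pow 3
  rw [← himage, integral_image_eq_integral_deriv_smul_of_monotoneOn measurableSet_Ioo
    (fun x hx ↦ (hderiv_s x hx).hasDerivWithinAt) hmono,
    setIntegral_congr_fun measurableSet_Ioo fun x hx ↦
      (smul_eq_mul _ _).trans <|
        deriv_mul_rpow_mul_one_sub_rpow he (hpos x hx) (hneg x hx) (hsq x hx),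
    setIntegral_const, Real.volume_real_Ioo_of_le hT.le, smul_eq_mul]
  ring

end PeriodIntegral

lemma ϖ₀_pos : 0 < ϖ₀ := by
  have := Real.Gamma_pos_of_pos (show (0 : ℝ) < 1 / 3 by norm_num)
  rw [ϖ₀]
  positivity

section HexagonalLattice

variable {ϖ : ℝ}

/-- The hexagonal lattice `hexLattice ϖ` with its basis `ϖ`, `τϖ`, as a `PeriodPair`; it is
parametrised by a positive `ϖ` so that `ϖ` is the least positive real period. -/
def hexPeriodPair (hϖ : 0 < ϖ) : PeriodPair where
  ω₁ := ϖ
  ω₂ := τ * ϖ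
  indep := by
    refine LinearIndependent.pair_iff.mpr fun s t h ↦ ?_
    have him := congrArg im h
    have hre := congrArg re h
    have ht : t = 0 := by simpa [τ_im, hϖ.ne'] using him
    exact ⟨by simpa [ht, hϖ.ne'] using hre, ht⟩

variable (hϖ : 0 < ϖ)

lemma mem_lattice_hexPeriodPair {z : ℂ} :
    z ∈ (hexPeriodPair hϖ).lattice ↔ z ∈ hexLattice ϖ := by
  simp only [PeriodPair.mem_lattice, hexPeriodPair, hexLattice, Set.mem_range, Prod.exists, hexPt,
    mul_assoc]

lemma isLatticeUnit_τ_hexPeriodPair : IsLatticeUnit (hexPeriodPair hϖ) τ := by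
  have hmul : ∀ z ∈ (hexPeriodPair hϖ).lattice, τ * z ∈ (hexPeriodPair hϖ).lattice := by
    simp only [mem_lattice_hexPeriodPair]
    rintro _ ⟨⟨m, n⟩, rfl⟩
    refine ⟨(-n, m + n), ?_⟩
    simp only [hexPt]
    push_cast
    linear_combination -n * ϖ * τ_sq
  refine fun z ↦ ⟨fun h ↦ ?_, hmul z⟩
  convert! neg_mem (hmul _ (hmul _ h)) using 1
  linear_combination z * τ_cube

lemma isConjInvariant_hexPeriodPair : IsConjInvariant (hexPeriodPair hϖ) := by
  have hconj : ∀ z ∈ (hexPeriodPair hϖ).lattice, conj z ∈ (hexPeriodPair hϖ).lattice := by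
    simp only [mem_lattice_hexPeriodPair]
    rintro _ ⟨⟨m, n⟩, rfl⟩
    refine ⟨(m + n, -n), ?_⟩
    simp only [hexPt, map_add, map_mul, map_intCast, conj_ofReal, conj_τ]
    push_cast
    ring
  exact fun z ↦ ⟨fun h ↦ by simpa using hconj _ h, hconj z⟩

lemma sqrtNegThree_mul_ofReal_notMem_lattice {x : ℝ} (hx : x ∈ Ioo 0 ϖ) :
    sqrtNegThree * x ∉ (hexPeriodPair hϖ).lattice := by
  rw [mem_lattice_hexPeriodPair]
  rintro ⟨⟨m, n⟩, h⟩
  have hre : m * ϖ + n * 2⁻¹ * ϖ = 0 := by simpa [hexPt, sqrtNegThree, τ_re] using congrArg re h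
  have him : n * (√3 / 2) * ϖ = √3 * x := by
    simpa [hexPt, sqrtNegThree, τ_im, mul_div_cancel₀] using congrArg im h
  have hn : n * ϖ = 2 * x :=
    mul_left_cancel₀ (Real.sqrt_ne_zero'.mpr zero_lt_three) (by linear_combination 2 * him)
  have hxm : x = (-m : ℤ) * ϖ := by push_cast; linear_combination hre - hn / 2
  obtain ⟨hx_pos, hx_lt⟩ := hx
  rw [hxm, mul_pos_iff_of_pos_right hϖ, Int.cast_pos] at hx_pos
  rw [hxm, mul_lt_iff_lt_one_left hϖ, ← Int.cast_one, Int.cast_lt] at hx_lt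
  lia

lemma ofReal_notMem_lattice_hexPeriodPair {x : ℝ} (hx : x ∈ Ioo 0 ϖ) :
    (x : ℂ) ∉ (hexPeriodPair hϖ).lattice :=
  mt (sqrtNegThree_mul_mem_lattice (isLatticeUnit_τ_hexPeriodPair hϖ))
    (sqrtNegThree_mul_ofReal_notMem_lattice hϖ hx)

lemma re_weierstrassP_hexPeriodPair_pos {x : ℝ} (hx : x ∈ Ioo 0 ϖ) :
    0 < (℘[hexPeriodPair hϖ] x).re := by
  by_contra! hnonpos
  have := left_nhdsWithin_Ioo_neBot hϖ
  have htop := tendsto_re_weierstrassP_nhdsGT_zero (hexPeriodPair hϖ)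
  rw [← nhdsWithin_Ioo_eq_nhdsGT hϖ] at htop
  obtain ⟨y, hy, hzero⟩ := isPreconnected_Ioo.intermediate_value_Ici hx
    (le_principal_iff.mpr self_mem_nhdsWithin) (fun y hy ↦ (hasDerivAt_re_weierstrassP
      (ofReal_notMem_lattice_hexPeriodPair hϖ hy)).continuousAt.continuousWithinAt) htop hnonpos
  rw [← ofReal_eq_zero, (isConjInvariant_hexPeriodPair hϖ).ofReal_re_weierstrassP,
    weierstrassP_eq_zero_iff (isLatticeUnit_τ_hexPeriodPair hϖ)
      (ofReal_notMem_lattice_hexPeriodPair hϖ hy)] at hzero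
  exact sqrtNegThree_mul_ofReal_notMem_lattice hϖ hy hzero

lemma g₃_hexPeriodPair_eq_weierstrassP_div_two :
    (hexPeriodPair hϖ).g₃ = 4 * ℘[hexPeriodPair hϖ] (ϖ / 2 : ℝ) ^ 3 := by
  have hsq := derivWeierstrassP_sq_of_τ (isLatticeUnit_τ_hexPeriodPair hϖ)
    (hexPeriodPair hϖ).ω₁_div_two_notMem_lattice
  rw [derivWeierstrassP_ω₁_div_two] at hsq
  have hhalf : (hexPeriodPair hϖ).ω₁ / 2 = (ϖ / 2 : ℝ) := by simp [hexPeriodPair]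
  rw [← hhalf]
  linear_combination hsq

lemma re_derivWeierstrassP_hexPeriodPair_neg {x : ℝ} (hx : x ∈ Ioo 0 (ϖ / 2)) :
    (℘'[hexPeriodPair hϖ] x).re < 0 :=
  re_derivWeierstrassP_neg (isConjInvariant_hexPeriodPair hϖ)
    (fun _ ↦ ofReal_notMem_lattice_hexPeriodPair hϖ) hx

lemma mul_sqrt_re_weierstrassP_hexPeriodPair_div_two :
    ϖ * √(℘[hexPeriodPair hϖ] (ϖ / 2 : ℝ)).re = 2 ^ (-(1 / 3) : ℝ) * ϖ₀ := by
  set e := (℘[hexPeriodPair hϖ] (ϖ / 2 : ℝ)).re with he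
  have hmem : ∀ x ∈ Ioc 0 (ϖ / 2), x ∈ Ioo 0 ϖ := fun x hx ↦ ⟨hx.1, by linarith [hx.2]⟩
  have hhalf : ϖ / 2 ∈ Ioc 0 (ϖ / 2) := ⟨half_pos hϖ, le_rfl⟩
  have hderiv : ∀ x ∈ Ioc 0 (ϖ / 2), HasDerivAt (fun x : ℝ ↦ (℘[hexPeriodPair hϖ] x).re)
      (℘'[hexPeriodPair hϖ] x).re x := fun x hx ↦
    hasDerivAt_re_weierstrassP (ofReal_notMem_lattice_hexPeriodPair hϖ (hmem x hx))
  have hsq : ∀ x ∈ Ioo 0 (ϖ / 2), (℘'[hexPeriodPair hϖ] x).re ^ 2 =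
      4 * ((℘[hexPeriodPair hϖ] x).re ^ 3 - e ^ 3) := fun x hx ↦ by
    have := derivWeierstrassP_sq_of_τ (isLatticeUnit_τ_hexPeriodPair hϖ)
      (ofReal_notMem_lattice_hexPeriodPair hϖ (hmem x (Ioo_subset_Ioc_self hx)))
    have hreal := isConjInvariant_hexPeriodPair hϖ
    rw [g₃_hexPeriodPair_eq_weierstrassP_div_two, ← mul_sub, ← hreal.ofReal_re_weierstrassP x,
      ← hreal.ofReal_re_weierstrassP (ϖ / 2), ← hreal.ofReal_re_derivWeierstrassP] at this
    exact_mod_cast this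
  have hbeta := setIntegral_eq_of_deriv_sq_eq_cubic
    (re_weierstrassP_hexPeriodPair_pos hϖ (hmem _ hhalf)) (half_pos hϖ)
    (fun x hx ↦ hderiv x (Ioo_subset_Ioc_self hx))
    (fun x ↦ re_derivWeierstrassP_hexPeriodPair_neg hϖ) hsq
    (tendsto_re_weierstrassP_nhdsGT_zero _)
    ((hderiv _ hhalf).continuousAt.tendsto.mono_left nhdsWithin_le_nhds)
  rw [setIntegral_rpow_mul_one_sub_rpow (by norm_num) (by norm_num),
    show (1 / 6 + 1 / 2 : ℝ) = 2 / 3 by norm_num,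
    Gamma_sixth_mul_Gamma_half_div_Gamma_two_thirds, ← he] at hbeta
  linear_combination -hbeta / 3

lemma g₃_hexPeriodPair : (hexPeriodPair hϖ).g₃ = (ϖ₀ / ϖ : ℂ) ^ 6 := by
  have hpos := re_weierstrassP_hexPeriodPair_pos hϖ (x := ϖ / 2) ⟨half_pos hϖ, half_lt_self hϖ⟩
  have hhalf := mul_sqrt_re_weierstrassP_hexPeriodPair_div_two hϖ
  set e := (℘[hexPeriodPair hϖ] (ϖ / 2 : ℝ)).re with he
  have htwo : ((2 : ℝ) ^ (-(1 / 3) : ℝ)) ^ 6 = 1 / 4 := by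
    rw [← Real.rpow_natCast, ← Real.rpow_mul zero_le_two]
    norm_num
  have hcube : 4 * e ^ 3 = (ϖ₀ / ϖ) ^ 6 := calc
    4 * e ^ 3 = 4 * (ϖ * √e) ^ 6 / ϖ ^ 6 := by
      rw [mul_pow, show √e ^ 6 = (√e ^ 2) ^ 3 by ring, Real.sq_sqrt hpos.le]
      field_simp
    _ = (ϖ₀ / ϖ) ^ 6 := by
      rw [hhalf, mul_pow, htwo]
      ring
  rw [g₃_hexPeriodPair_eq_weierstrassP_div_two,
    ← (isConjInvariant_hexPeriodPair hϖ).ofReal_re_weierstrassP, ← he]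
  exact_mod_cast hcube

lemma derivWeierstrassP_hexPeriodPair_div_three :
    ℘'[hexPeriodPair hϖ] (ϖ / 3 : ℝ) = -(√3 * (ϖ₀ / ϖ) ^ 3 : ℝ) := by
  have hmem : ϖ / 3 ∈ Ioo 0 ϖ := ⟨by positivity, by linarith⟩
  have hneg := re_derivWeierstrassP_hexPeriodPair_neg hϖ (x := ϖ / 3) ⟨hmem.1, by linarith⟩
  have hthree : (3 : ℂ) * (ϖ / 3 : ℝ) ∈ (hexPeriodPair hϖ).lattice := by
    convert! (hexPeriodPair hϖ).ω₁_mem_lattice using 1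
    push_cast
    exact mul_div_cancel₀ _ three_ne_zero
  have hsq := derivWeierstrassP_sq_of_τ (isLatticeUnit_τ_hexPeriodPair hϖ)
    (ofReal_notMem_lattice_hexPeriodPair hϖ hmem)
  rw [weierstrassP_cube_eq_g₃ (isLatticeUnit_τ_hexPeriodPair hϖ)
    (sqrtNegThree_mul_ofReal_notMem_lattice hϖ hmem) hthree, g₃_hexPeriodPair,
    ← (isConjInvariant_hexPeriodPair hϖ).ofReal_re_derivWeierstrassP] at hsq
  rw [← (isConjInvariant_hexPeriodPair hϖ).ofReal_re_derivWeierstrassP, ← ofReal_neg, ofReal_inj]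
  have hsq_real : (℘'[hexPeriodPair hϖ] (ϖ / 3 : ℝ)).re ^ 2 = (√3 * (ϖ₀ / ϖ) ^ 3) ^ 2 := by
    rw [mul_pow, Real.sq_sqrt zero_le_three]
    have : (℘'[hexPeriodPair hϖ] (ϖ / 3 : ℝ)).re ^ 2 = 4 * (ϖ₀ / ϖ) ^ 6 - (ϖ₀ / ϖ) ^ 6 := by
      exact_mod_cast hsq
    linear_combination this
  have := ϖ₀_pos
  exact (sq_eq_sq_iff_eq_or_eq_neg.mp hsq_real).resolve_left
    (hneg.trans_le (by positivity)).ne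

lemma sub_τ_pow_four_mul_mem_lattice_iff {z : ℂ} :
    z - τ ^ 4 * (ϖ / 3) ∈ (hexPeriodPair hϖ).lattice ↔
      z - τ * (2 * ϖ / 3) ∈ (hexPeriodPair hϖ).lattice := by
  have : z - τ ^ 4 * (ϖ / 3) = z - τ * (2 * ϖ / 3) + τ * ϖ := by
    linear_combination -(ϖ / 3 : ℂ) * τ * τ_cube
  rw [this]
  exact Submodule.add_mem_iff_left _ (hexPeriodPair hϖ).ω₂_mem_lattice

end HexagonalLattice

lemma wp_eq_weierstrassP : wp = ℘[hexPeriodPair ϖ₀_pos] := by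
  ext z
  let L := hexPeriodPair ϖ₀_pos
  have hcoe (p : ℤ × ℤ) : (L.latticeEquivProd.symm p : ℂ) = hexPt ϖ₀ p := by
    rw [L.latticeEquiv_symm_apply]
    simp only [L, hexPeriodPair, hexPt, mul_assoc]
  have hsum : HasSum (fun p ↦ 1 / (z - hexPt ϖ₀ p) ^ 2 - 1 / hexPt ϖ₀ p ^ 2) (℘[L] z) := by
    simpa only [Function.comp_def, LinearEquiv.coe_toEquiv, hcoe] using
      L.latticeEquivProd.symm.toEquiv.hasSum_iff.mpr (L.hasSum_weierstrassP z)
  have hsplit := hsum.summable.tsum_subtype_add_tsum_subtype_compl {0}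
  rw [tsum_singleton 0 fun p ↦ 1 / (z - hexPt ϖ₀ p) ^ 2 - 1 / hexPt ϖ₀ p ^ 2,
    hsum.tsum_eq] at hsplit
  rw [← hsplit, wp]
  congr 1
  simp [hexPt]

lemma deriv_wp : deriv wp = ℘'[hexPeriodPair ϖ₀_pos] := by
  rw [wp_eq_weierstrassP, PeriodPair.deriv_weierstrassP]

lemma derivWeierstrassP_ϖ₀_div_three : ℘'[hexPeriodPair ϖ₀_pos] (ϖ₀ / 3) = -√3 := by
  simpa [ϖ₀_pos.ne'] using derivWeierstrassP_hexPeriodPair_div_three ϖ₀_pos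

lemma ϖ₀_div_three_notMem_lattice : (ϖ₀ / 3 : ℂ) ∉ (hexPeriodPair ϖ₀_pos).lattice := by
  have := ϖ₀_pos
  exact_mod_cast ofReal_notMem_lattice_hexPeriodPair ϖ₀_pos
    (x := ϖ₀ / 3) ⟨by positivity, by linarith⟩

lemma exp_two_pi_mul_I_div_three : exp (2 * Real.pi * I / 3) = τ ^ 2 := by
  rw [τ, ← exp_nat_mul]
  congr 1
  push_cast
  ring

/-- the zeros of `℘'(z) + √3` are exactly
`ϖ/3 + ω`, `e^{πi/3}·(2ϖ/3) + ω`, `e^{2πi/3}·(ϖ/3) + ω`, `ω ∈ 𝕋`, all simple. -/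
theorem wp'_plus_sqrt3_zeros :
    (∀ z : ℂ, z ∉ hexLattice ϖ₀ →
      (deriv wp z + (Real.sqrt 3 : ℂ) = 0 ↔ ∃ ω ∈ hexLattice ϖ₀,
        z = (ϖ₀ : ℂ) / 3 + ω ∨
        z = τ * (2 * (ϖ₀ : ℂ) / 3) + ω ∨
        z = Complex.exp (2 * Real.pi * Complex.I / 3) * ((ϖ₀ : ℂ) / 3) + ω)) ∧
    (∀ z : ℂ, z ∉ hexLattice ϖ₀ → deriv wp z + (Real.sqrt 3 : ℂ) = 0 →
      deriv (deriv wp) z ≠ 0) := by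
  have hτ := isLatticeUnit_τ_hexPeriodPair ϖ₀_pos
  simp only [deriv_wp, ← mem_lattice_hexPeriodPair ϖ₀_pos, add_eq_zero_iff_eq_neg,
    ← sub_eq_iff_eq_add', and_or_left, exists_or, exists_eq_right']
  refine ⟨fun z hz ↦ ?_, fun z hz hP' ↦ ?_⟩
  · rw [← derivWeierstrassP_ϖ₀_div_three,
      derivWeierstrassP_eq_iff hτ hz ϖ₀_div_three_notMem_lattice,
      sub_τ_pow_four_mul_mem_lattice_iff, exp_two_pi_mul_I_div_three]
    exact or_congr_right or_comm
  · rw [(hasDerivAt_derivWeierstrassP_of_τ hτ hz).deriv]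
    have hsq := derivWeierstrassP_sq_of_τ hτ hz
    rw [hP', neg_sq, ← ofReal_pow, Real.sq_sqrt zero_le_three, g₃_hexPeriodPair] at hsq
    have : ℘[hexPeriodPair ϖ₀_pos] z ≠ 0 := fun hP ↦ by
      norm_num [hP, ϖ₀_pos.ne'] at hsq
    simpa using this
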